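/- Suppose every Z_3-reduced graph has minimum degree at most 4. Then every 4-edge-connected graph admits a mod 3-orientation (equivalently, a nowhere-zero 3-flow). -/

import Mathlib

open Finset

/-- A finite multigraph without loops: each edge `e` has two distinct
endpoints `fst e` and `snd e`.  An orientation is a map `D : E → Bool`,
where `D e = true` means `e` is directed from `fst e` to `snd e`. -/
structure Multigraph (V : Type) (E : Type) where
  fst : E → V
  snd : E → V
  no_loop : ∀ e, fst e ≠ snd e

namespace Multigraph

variable {V E : Type} [Fintype V] [DecidableEq V] [Fintype E] [DecidableEq E]

/-- The tail (initial vertex) of edge `e` under orientation `D`. -/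
def tail (G : Multigraph V E) (D : E → Bool) (e : E) : V :=
  if D e then G.fst e else G.snd e

/-- The head (terminal vertex) of edge `e` under orientation `D`. -/
def head (G : Multigraph V E) (D : E → Bool) (e : E) : V :=
  if D e then G.snd e else G.fst e

/-- Outdegree `d⁺_D(v)` (as an integer, for convenience). -/
def outDeg (G : Multigraph V E) (D : E → Bool) (v : V) : ℤ :=
  ((univ.filter fun e => G.tail D e = v).card : ℤ)

/-- Indegree `d⁻_D(v)`. -/
def inDeg (G : Multigraph V E) (D : E → Bool) (v : V) : ℤ :=
  ((univ.filter fun e => G.head D e = v).card : ℤ)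

/-- `e` is incident with `v`. -/
def Incident (G : Multigraph V E) (v : V) (e : E) : Prop :=
  G.fst e = v ∨ G.snd e = v

instance (G : Multigraph V E) (v : V) : DecidablePred (G.Incident v) := fun e =>
  inferInstanceAs (Decidable (G.fst e = v ∨ G.snd e = v))

/-- The degree of a vertex. -/
def degree (G : Multigraph V E) (v : V) : ℕ :=
  (univ.filter fun e => G.Incident v e).card

/-- The edge-cut `∂_G(A)`: edges with exactly one endpoint in `A`. -/
def cut (G : Multigraph V E) (A : Finset V) : Finset E :=
  univ.filter fun e => ¬ ((G.fst e ∈ A) ↔ (G.snd e ∈ A))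

/-- `G` is `k`-edge-connected: every edge-cut has at least `k` edges. -/
def EdgeConnected (G : Multigraph V E) (k : ℕ) : Prop :=
  ∀ A : Finset V, A.Nonempty → A ≠ univ → k ≤ (G.cut A).card

/-- A boundary function: values in `ℤ₃` summing to `0`. -/
def IsBoundary (β : V → ZMod 3) : Prop := ∑ v, β v = 0

/-- `D` is a `β`-orientation: `d⁺(v) - d⁻(v) ≡ β v (mod 3)` at every vertex. -/
def IsBetaOrientation (G : Multigraph V E) (β : V → ZMod 3) (D : E → Bool) : Prop :=
  ∀ v : V, ((G.outDeg D v - G.inDeg D v : ℤ) : ZMod 3) = β v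

/-- A mod 3-orientation: `d⁺(v) ≡ d⁻(v) (mod 3)` at every vertex. -/
def IsMod3Orientation (G : Multigraph V E) (D : E → Bool) : Prop :=
  ∀ v : V, ((G.outDeg D v - G.inDeg D v : ℤ) : ZMod 3) = 0

/-- `G` admits a mod 3-orientation (equivalently, a nowhere-zero 3-flow). -/
def Mod3Orientable (G : Multigraph V E) : Prop := ∃ D, G.IsMod3Orientation D

/-- `G` is `ℤ₃`-connected. -/
def Z3Connected (G : Multigraph V E) : Prop :=
  ∀ β : V → ZMod 3, IsBoundary β → ∃ D, G.IsBetaOrientation β D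

/-- `G` is `ℤ₃`-extendable at `x`: every pre-orientation of the edges at `x`
compatible with `β x` extends to a `β`-orientation of `G`. -/
def Z3ExtendableAt (G : Multigraph V E) (x : V) : Prop :=
  ∀ β : V → ZMod 3, IsBoundary β →
    ∀ D₀ : E → Bool, ((G.outDeg D₀ x - G.inDeg D₀ x : ℤ) : ZMod 3) = β x →
      ∃ D : E → Bool, (∀ e, G.Incident x e → D e = D₀ e) ∧ G.IsBetaOrientation β D

/-- `G` is mod-3-extendable at `x`: every pre-orientation of `∂(x)` with
`d⁺(x) ≡ d⁻(x) (mod 3)` extends to a mod 3-orientation of `G`. -/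
def Mod3ExtendableAt (G : Multigraph V E) (x : V) : Prop :=
  ∀ D₀ : E → Bool, ((G.outDeg D₀ x - G.inDeg D₀ x : ℤ) : ZMod 3) = 0 →
    ∃ D : E → Bool, (∀ e, G.Incident x e → D e = D₀ e) ∧ G.IsMod3Orientation D

/-- `A` is a `k`-critical-set: `d(A) ≤ k` but every nonempty proper subset has
larger boundary. -/
def CriticalSet (G : Multigraph V E) (k : ℕ) (A : Finset V) : Prop :=
  A.Nonempty ∧ A ≠ univ ∧ (G.cut A).card ≤ k ∧
    ∀ B : Finset V, B.Nonempty → B ⊂ A → k < (G.cut B).card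

/-- The set of edge-cuts of size exactly `k` (as sets of edges). -/
def kCuts (G : Multigraph V E) (k : ℕ) : Finset (Finset E) :=
  ((univ : Finset (Finset V)).filter
    fun A => A.Nonempty ∧ A ≠ univ ∧ (G.cut A).card = k).image G.cut


/-- The subgraph of `G` with vertex set `S` and edge set `F` (all edges of `F`
having both endpoints in `S`). -/
def subgraphOn (G : Multigraph V E) (S : Finset V) (F : Finset E)
    (hF : ∀ e ∈ F, G.fst e ∈ S ∧ G.snd e ∈ S) :
    Multigraph {v : V // v ∈ S} {e : E // e ∈ F} where
  fst e := ⟨G.fst e.1, (hF e.1 e.2).1⟩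
  snd e := ⟨G.snd e.1, (hF e.1 e.2).2⟩
  no_loop e h := G.no_loop e.1 (congrArg Subtype.val h)

/-- `G` is `ℤ₃`-reduced: it contains no `ℤ₃`-connected subgraph with at least
two vertices. -/
def Z3Reduced (G : Multigraph V E) : Prop :=
  ∀ (S : Finset V) (F : Finset E) (hF : ∀ e ∈ F, G.fst e ∈ S ∧ G.snd e ∈ S),
    2 ≤ S.card → ¬ (G.subgraphOn S F hF).Z3Connected

/-- The boundary of a `ℤ₃`-valued function on the edges. -/
def bd {V E : Type} [DecidableEq V] [Fintype E] (f s : E → V) (φ : E → ZMod 3) (v : V) : ZMod 3 :=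
  ∑ e, φ e * ((if f e = v then 1 else 0) - (if s e = v then 1 else 0))

/-- Number of edges crossing `A`. -/
def cr {V E : Type} [DecidableEq V] [Fintype E] (f s : E → V) (A : Finset V) : ℕ :=
  ∑ e, if (f e ∈ A ↔ s e ∈ A) then 0 else 1

/-- Nowhere-zero flow. -/
def NZ {V E : Type} [DecidableEq V] [Fintype E] (f s : E → V) : Prop :=
  ∃ φ : E → ZMod 3, (∀ e, φ e ≠ 0) ∧ ∀ v, bd f s φ v = 0

/-- Sign of an orientation bit. -/
def sg (b : Bool) : ZMod 3 := if b then 1 else -1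

theorem sg_ne (b : Bool) : sg b ≠ 0 := by cases b <;> decide

theorem exists_sg (x : ZMod 3) (h : x ≠ 0) : ∃ b, sg b = x := by
  revert x; decide

theorem cut_card (G : Multigraph V E) (A : Finset V) : (G.cut A).card = cr G.fst G.snd A := by
  unfold cut cr
  rw [Finset.card_filter]
  refine Finset.sum_congr rfl fun e _ => ?_
  by_cases h : (G.fst e ∈ A ↔ G.snd e ∈ A) <;> simp [h]

theorem deg_bd (G : Multigraph V E) (D : E → Bool) (v : V) :
    ((G.outDeg D v - G.inDeg D v : ℤ) : ZMod 3) = bd G.fst G.snd (fun e => sg (D e)) v := by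
  unfold outDeg inDeg bd
  rw [Finset.card_filter, Finset.card_filter]
  push_cast
  rw [← Finset.sum_sub_distrib]
  refine Finset.sum_congr rfl fun e _ => ?_
  unfold tail head sg
  cases D e <;> simp

theorem orientable_of_NZ (G : Multigraph V E) (h : NZ G.fst G.snd) : G.Mod3Orientable := by
  obtain ⟨φ, h0, hb⟩ := h
  choose D hD using fun e => exists_sg (φ e) (h0 e)
  refine ⟨D, fun v => ?_⟩
  rw [deg_bd, ← hb v]
  simp [hD]

theorem sum_sub {M : Type} [AddCommMonoid M] {E : Type} [Fintype E] (p : E → Prop) [DecidablePred p]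
    [Fintype {e // p e}]
    (g : E → M) (h : ∀ e, ¬ p e → g e = 0) : ∑ e, g e = ∑ e : {e // p e}, g e := by
  rw [← Finset.sum_subtype (Finset.univ.filter p) (by simp) g, Finset.sum_filter]
  refine Finset.sum_congr rfl fun e _ => ?_
  by_cases hp : p e <;> simp [hp, h]

theorem loopy (H : ∀ (E : Type) [Fintype E] [DecidableEq E] (G : Multigraph V E),
      G.EdgeConnected 4 → NZ G.fst G.snd)
    (f s : E → V) (hc : ∀ A : Finset V, A.Nonempty → A ≠ univ → 4 ≤ cr f s A) : NZ f s := by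
  let G : Multigraph V {e : E // f e ≠ s e} := ⟨fun e => f e, fun e => s e, fun e => e.2⟩
  obtain ⟨φ, h0, hb⟩ := H _ G (by
    intro A h1 h2
    rw [cut_card]
    refine (hc A h1 h2).trans (le_of_eq ?_)
    unfold cr
    rw [sum_sub (fun e => f e ≠ s e)]
    intro e he
    rw [not_not] at he
    simp [he])
  refine ⟨fun e => if h : f e ≠ s e then φ ⟨e, h⟩ else 1, fun e => ?_, fun v => ?_⟩
  · dsimp only
    split_ifs
    · exact h0 _
    · decide
  · rw [← hb v]
    unfold bd
    rw [sum_sub (fun e => f e ≠ s e)]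
    · refine Finset.sum_congr rfl fun e _ => ?_
      beta_reduce
      rw [dif_pos e.2]
    · intro e he
      rw [not_not] at he
      simp [he]

/-- Contraction map. -/
def ctr (S : Finset V) (v : V) : Option {v : V // v ∉ S} :=
  if h : v ∈ S then none else some ⟨v, h⟩

theorem ctr_none (S : Finset V) (v : V) : ctr S v = none ↔ v ∈ S := by
  unfold ctr; split_ifs <;> simp_all

theorem ctr_some (S : Finset V) (v : V) (u : {v : V // v ∉ S}) : ctr S v = some u ↔ v = u := by
  unfold ctr
  split_ifs with h
  · simp only [reduceCtorEq, false_iff]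
    rintro rfl
    exact u.2 h
  · simp [Subtype.ext_iff]

theorem contract (G : Multigraph V E) (S : Finset V) (F : Finset E)
    (hF : ∀ e ∈ F, G.fst e ∈ S ∧ G.snd e ∈ S) (hZ : (G.subgraphOn S F hF).Z3Connected)
    (hN : NZ (fun e => ctr S (G.fst e)) (fun e => ctr S (G.snd e))) : NZ G.fst G.snd := by
  obtain ⟨φ, h0, hb⟩ := hN
  let b : V → ZMod 3 := fun v => ∑ e, if e ∈ F then 0 else
    φ e * ((if G.fst e = v then 1 else 0) - (if G.snd e = v then 1 else 0))
  have hb1 : ∀ v, v ∉ S → b v = 0 := by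
    intro v hv
    rw [← hb (some ⟨v, hv⟩)]
    unfold bd
    refine Finset.sum_congr rfl fun e _ => ?_
    simp only [ctr_some]
    by_cases h1 : e ∈ F
    · have h2 : G.fst e ≠ v := fun h => hv (h ▸ (hF e h1).1)
      have h3 : G.snd e ≠ v := fun h => hv (h ▸ (hF e h1).2)
      simp [h1, h2, h3]
    · simp [h1]
  have hb2 : ∑ v ∈ S, b v = 0 := by
    rw [← hb none]
    unfold bd
    simp only [b]
    rw [Finset.sum_comm]
    refine Finset.sum_congr rfl fun e _ => ?_
    simp only [ctr_none]
    by_cases h1 : e ∈ F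
    · simp [h1, hF e h1]
    · simp only [h1, if_false]
      rw [← Finset.mul_sum, Finset.sum_sub_distrib]
      simp
  obtain ⟨D, hD⟩ := hZ (fun v => - b v.1) (by
    unfold IsBoundary
    rw [Finset.sum_neg_distrib, neg_eq_zero, ← hb2]
    exact (Finset.sum_subtype S (fun _ => Iff.rfl) b).symm)
  refine ⟨fun e => if h : e ∈ F then sg (D ⟨e, h⟩) else φ e, fun e => ?_, fun v => ?_⟩
  · dsimp only
    split_ifs
    · exact sg_ne _
    · exact h0 e
  · have key : bd G.fst G.snd (fun e => if h : e ∈ F then sg (D ⟨e, h⟩) else φ e) v =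
        b v + ∑ e : {e // e ∈ F}, sg (D e) *
          ((if G.fst e = v then 1 else 0) - (if G.snd e = v then 1 else 0)) := by
      have h3 : ∑ e : {e // e ∈ F}, sg (D e) *
          ((if G.fst e = v then 1 else 0) - (if G.snd e = v then 1 else 0)) =
          ∑ e, (if h : e ∈ F then sg (D ⟨e, h⟩) else 0) *
          ((if G.fst e = v then 1 else 0) - (if G.snd e = v then 1 else 0)) := by
        rw [sum_sub (fun e => e ∈ F) (fun e => (if h : e ∈ F then sg (D ⟨e, h⟩) else 0) *
          ((if G.fst e = v then 1 else 0) - (if G.snd e = v then 1 else 0)))]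
        · refine Finset.sum_congr rfl fun e _ => ?_
          rw [dif_pos e.2]
        · intro e he
          simp [he]
      rw [h3]
      unfold bd
      simp only [b]
      rw [← Finset.sum_add_distrib]
      refine Finset.sum_congr rfl fun e _ => ?_
      by_cases h1 : e ∈ F <;> simp [h1]
    rw [key]
    by_cases hv : v ∈ S
    · have h5 := hD ⟨v, hv⟩
      rw [deg_bd] at h5
      unfold bd subgraphOn at h5
      simp only [Subtype.mk.injEq] at h5
      rw [h5]
      simp
    · rw [hb1 v hv, zero_add]
      refine Finset.sum_eq_zero fun e _ => ?_
      have h6 := hF e.1 e.2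
      rw [if_neg, if_neg]
      · simp
      · intro h; exact hv (h ▸ h6.2)
      · intro h; exact hv (h ▸ h6.1)

theorem contract_cut (G : Multigraph V E) (S : Finset V) (hS : S.Nonempty)
    (h4 : G.EdgeConnected 4) (A : Finset (Option {v : V // v ∉ S})) (h1 : A.Nonempty)
    (h2 : A ≠ univ) : 4 ≤ cr (fun e => ctr S (G.fst e)) (fun e => ctr S (G.snd e)) A := by
  have surj : ∀ u, ∃ v, ctr S v = u := by
    intro u
    cases u with
    | none =>
      obtain ⟨r, hr⟩ := hS
      exact ⟨r, (ctr_none S r).2 hr⟩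
    | some u => exact ⟨u, (ctr_some S u u).2 rfl⟩
  have := h4 (univ.filter fun v => ctr S v ∈ A) (by
      obtain ⟨u, hu⟩ := h1
      obtain ⟨v, rfl⟩ := surj u
      exact ⟨v, by simpa using hu⟩) (by
      intro h
      apply h2
      ext u
      obtain ⟨v, rfl⟩ := surj u
      have : v ∈ (univ.filter fun v => ctr S v ∈ A) := by rw [h]; simp
      simpa using this)
  rw [cut_card] at this
  simpa [cr] using this

/-- The end of `e` other than `v`. -/
def oth (G : Multigraph V E) (v : V) (e : E) : V := if G.fst e = v then G.snd e else G.fst e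

/-- Crossing edges outside `T`. -/
def d0 (G : Multigraph V E) (T : Finset E) (A : Finset V) : ℕ :=
  ∑ e ∈ univ \ T, if (G.fst e ∈ A ↔ G.snd e ∈ A) then 0 else 1

theorem oth_ne (G : Multigraph V E) (v : V) (e : E) : oth G v e ≠ v := by
  unfold oth
  split_ifs with h
  · intro h'; exact G.no_loop e (h.trans h'.symm)
  · exact h

theorem cr_oth (G : Multigraph V E) (v : V) (e : E) (he : G.Incident v e) (A : Finset V) :
    (G.fst e ∈ A ↔ G.snd e ∈ A) ↔ (v ∈ A ↔ oth G v e ∈ A) := by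
  unfold oth
  rcases he with h | h
  · simp [h]
  · have : G.fst e ≠ v := fun h' => G.no_loop e (h'.trans h.symm)
    simp only [this, if_false, h]
    tauto

theorem sum_T {M : Type} [AddCommMonoid M] {a b c d : E} (hab : a ≠ b) (hac : a ≠ c) (had : a ≠ d)
    (hbc : b ≠ c) (hbd : b ≠ d) (hcd : c ≠ d) (g : E → M) :
    ∑ e, g e = ∑ e ∈ univ \ {a, b, c, d}, g e + (g a + (g b + (g c + g d))) := by
  rw [← Finset.sum_sdiff (Finset.subset_univ {a, b, c, d})]
  rw [Finset.sum_insert (s := {b, c, d}) (by simp [*]), Finset.sum_insert (s := {c, d}) (by simp [*]),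
    Finset.sum_insert (s := {d}) (by simp [*]), Finset.sum_singleton]

/-- The pairing `ab|cd` preserves 4-edge-connectivity. -/
def Good (G : Multigraph V E) (v : V) (a b c d : E) : Prop :=
  ∀ A : Finset V, v ∉ A → A.Nonempty → (∃ w, w ≠ v ∧ w ∉ A) →
    4 ≤ d0 G {a, b, c, d} A + (if (oth G v a ∈ A ↔ oth G v b ∈ A) then 0 else 1)
      + (if (oth G v c ∈ A ↔ oth G v d ∈ A) then 0 else 1)

theorem cut_eq (G : Multigraph V E) {v : V} {a b c d : E} (hab : a ≠ b) (hac : a ≠ c) (had : a ≠ d)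
    (hbc : b ≠ c) (hbd : b ≠ d) (hcd : c ≠ d) (hT : ∀ e, G.Incident v e ↔ e ∈ ({a, b, c, d} : Finset E))
    (A : Finset V) : (G.cut A).card = d0 G {a, b, c, d} A +
      ((if (v ∈ A ↔ oth G v a ∈ A) then 0 else 1) + ((if (v ∈ A ↔ oth G v b ∈ A) then 0 else 1) +
      ((if (v ∈ A ↔ oth G v c ∈ A) then 0 else 1) + (if (v ∈ A ↔ oth G v d ∈ A) then 0 else 1)))) := by
  rw [cut_card]
  unfold cr d0
  rw [sum_T hab hac had hbc hbd hcd]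
  simp only [cr_oth G v a ((hT a).2 (by simp)), cr_oth G v b ((hT b).2 (by simp)),
    cr_oth G v c ((hT c).2 (by simp)), cr_oth G v d ((hT d).2 (by simp))]

theorem d0_insert (G : Multigraph V E) {v : V} {T : Finset E} (hT : ∀ e, G.Incident v e ↔ e ∈ T)
    (A : Finset V) : d0 G T (insert v A) = d0 G T A := by
  unfold d0
  refine Finset.sum_congr rfl fun e he => ?_
  have : ¬ G.Incident v e := by
    rw [hT]; simpa using he
  unfold Incident at this
  push Not at this
  simp [this]

theorem bad (G : Multigraph V E) (h4 : G.EdgeConnected 4) {v : V} {a b c d : E}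
    (hab : a ≠ b) (hac : a ≠ c) (had : a ≠ d)
    (hbc : b ≠ c) (hbd : b ≠ d) (hcd : c ≠ d) (hT : ∀ e, G.Incident v e ↔ e ∈ ({a, b, c, d} : Finset E))
    (hg : ¬ Good G v a b c d) : ∃ A : Finset V, v ∉ A ∧ d0 G {a, b, c, d} A ≤ 3 ∧
      (oth G v a ∈ A ↔ oth G v b ∈ A) ∧ (oth G v c ∈ A ↔ oth G v d ∈ A) ∧
      ¬ (oth G v a ∈ A ↔ oth G v c ∈ A) := by
  unfold Good at hg
  push Not at hg
  obtain ⟨A, hv, hne, ⟨w, hw, hwA⟩, hlt⟩ := hg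
  have k1 := h4 A hne (by rintro rfl; simp at hv)
  have k2 := h4 (insert v A) (by simp) (by
    intro h
    have : w ∈ insert v A := by rw [h]; simp
    simp [hw, hwA] at this)
  rw [cut_eq G hab hac had hbc hbd hcd hT] at k1 k2
  rw [d0_insert G hT] at k2
  simp only [Finset.mem_insert, oth_ne, false_or, true_or, hv, true_iff, false_iff] at k1 k2
  refine ⟨A, hv, ?_⟩
  by_cases ha : oth G v a ∈ A <;> by_cases hb : oth G v b ∈ A <;>
    by_cases hc : oth G v c ∈ A <;> by_cases hd : oth G v d ∈ A <;>
    simp only [ha, hb, hc, hd, if_true, if_false, not_true, not_false_iff, iff_self, iff_true,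
      true_iff, iff_false, false_iff, and_true, true_and, and_false] at k1 k2 hlt ⊢ <;> omega

theorem prop_aux {a b c d : Prop} (h1 : a ↔ b) (h2 : c ↔ d) (h3 : ¬ (a ↔ c)) :
    (c ↔ ¬ a) ∧ (d ↔ ¬ a) := by
  by_cases a <;> by_cases c <;> simp_all

set_option maxHeartbeats 1000000 in
theorem good_or (G : Multigraph V E) (h4 : G.EdgeConnected 4) {v : V} {a b c d : E}
    (hab : a ≠ b) (hac : a ≠ c) (had : a ≠ d)
    (hbc : b ≠ c) (hbd : b ≠ d) (hcd : c ≠ d) (hT : ∀ e, G.Incident v e ↔ e ∈ ({a, b, c, d} : Finset E)) :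
    Good G v a b c d ∨ Good G v a c b d := by
  by_contra hcon
  push Not at hcon
  have hTe : ({a, c, b, d} : Finset E) = {a, b, c, d} := by
    ext; simp; tauto
  obtain ⟨A, hvA, hA, a1, a2, a3⟩ := bad G h4 hab hac had hbc hbd hcd hT hcon.1
  obtain ⟨B, hvB, hB, b1, b2, b3⟩ := bad G h4 hac hab had hbc.symm hcd hbd (by rw [hTe]; exact hT) hcon.2
  rw [hTe] at hB
  have quad : ∀ p q : Prop, ∀ Q : Finset V, (∀ u, u ∈ Q ↔ u ≠ v ∧ (u ∈ A ↔ p) ∧ (u ∈ B ↔ q)) →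
      3 ≤ d0 G {a, b, c, d} Q := by
    classical
    intro p q Q hQ
    have hvQ : v ∉ Q := by simp [hQ]
    have n1 : oth G v b ∈ A ↔ oth G v a ∈ A := a1.symm
    have n2 : oth G v c ∈ A ↔ ¬ oth G v a ∈ A := (prop_aux a1 a2 a3).1
    have n3 : oth G v d ∈ A ↔ ¬ oth G v a ∈ A := (prop_aux a1 a2 a3).2
    have n4 : oth G v c ∈ B ↔ oth G v a ∈ B := b1.symm
    have n5 : oth G v b ∈ B ↔ ¬ oth G v a ∈ B := (prop_aux b1 b2 b3).1
    have n6 : oth G v d ∈ B ↔ ¬ oth G v a ∈ B := (prop_aux b1 b2 b3).2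
    have k := h4 Q (by
      have : oth G v a ∈ Q ∨ oth G v b ∈ Q ∨ oth G v c ∈ Q ∨ oth G v d ∈ Q := by
        simp only [hQ, oth_ne, ne_eq, not_false_iff, true_and, n1, n2, n3, n4, n5, n6]
        clear * -
        by_cases ha : oth G v a ∈ A <;> by_cases hb : oth G v a ∈ B <;>
          by_cases hp : p <;> by_cases hq : q <;> simp [ha, hb, hp, hq]
      rcases this with h | h | h | h <;> exact ⟨_, h⟩) (by rintro rfl; simp at hvQ)
    rw [cut_eq G hab hac had hbc hbd hcd hT] at k
    simp only [hvQ, false_iff] at k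
    simp only [hQ, oth_ne, ne_eq, not_false_iff, true_and, n1, n2, n3, n4, n5, n6] at k
    clear * - k
    by_cases ha : oth G v a ∈ A <;> by_cases hb : oth G v a ∈ B <;>
      by_cases hp : p <;> by_cases hq : q <;> simp [ha, hb, hp, hq] at k <;> omega
  have q1 := quad True True (A ∩ B) (by
    intro u; have : u = v → u ∉ A := by rintro rfl; exact hvA
    clear * - this
    simp; tauto)
  have q2 := quad True False (A \ B) (by
    intro u; have : u = v → u ∉ A := by rintro rfl; exact hvA
    clear * - this
    simp; tauto)
  have q3 := quad False True (B \ A) (by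
    intro u; have : u = v → u ∉ B := by rintro rfl; exact hvB
    clear * - this
    simp; tauto)
  have q4 := quad False False (univ \ insert v (A ∪ B)) (by
    intro u; simp)
  have hout : ∀ e ∈ univ \ ({a, b, c, d} : Finset E), G.fst e ≠ v ∧ G.snd e ≠ v := by
    intro e he
    have : ¬ G.Incident v e := by
      rw [hT]; exact (Finset.mem_sdiff.1 he).2
    unfold Incident at this
    push Not at this
    exact this
  generalize ({a, b, c, d} : Finset E) = T at *
  have r1 : d0 G T (A ∩ B) + d0 G T (A \ B) ≤ d0 G T A + 2 * ∑ e ∈ univ \ T,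
      (if (G.fst e ∈ A ∧ G.snd e ∈ A ∧ ¬ (G.fst e ∈ B ↔ G.snd e ∈ B)) then 1 else 0) := by
    unfold d0
    rw [Finset.mul_sum, ← Finset.sum_add_distrib, ← Finset.sum_add_distrib]
    refine Finset.sum_le_sum fun e he => ?_
    by_cases h1 : G.fst e ∈ A <;> by_cases h2 : G.snd e ∈ A <;>
      by_cases h3 : G.fst e ∈ B <;> by_cases h4 : G.snd e ∈ B <;> simp [h1, h2, h3, h4]
  have r2 : d0 G T (B \ A) + d0 G T (univ \ insert v (A ∪ B)) ≤ d0 G T A + 2 * ∑ e ∈ univ \ T,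
      (if (G.fst e ∉ A ∧ G.snd e ∉ A ∧ ¬ (G.fst e ∈ B ↔ G.snd e ∈ B)) then 1 else 0) := by
    unfold d0
    rw [Finset.mul_sum, ← Finset.sum_add_distrib, ← Finset.sum_add_distrib]
    refine Finset.sum_le_sum fun e he => ?_
    have := hout e he
    by_cases h1 : G.fst e ∈ A <;> by_cases h2 : G.snd e ∈ A <;>
      by_cases h3 : G.fst e ∈ B <;> by_cases h4 : G.snd e ∈ B <;> simp [h1, h2, h3, h4, this]
  have r3 : ∑ e ∈ univ \ T,
      (if (G.fst e ∈ A ∧ G.snd e ∈ A ∧ ¬ (G.fst e ∈ B ↔ G.snd e ∈ B)) then 1 else 0) + ∑ e ∈ univ \ T,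
      (if (G.fst e ∉ A ∧ G.snd e ∉ A ∧ ¬ (G.fst e ∈ B ↔ G.snd e ∈ B)) then 1 else 0)
      ≤ d0 G T B := by
    unfold d0
    rw [← Finset.sum_add_distrib]
    refine Finset.sum_le_sum fun e he => ?_
    by_cases h1 : G.fst e ∈ A <;> by_cases h2 : G.snd e ∈ A <;>
      by_cases h3 : G.fst e ∈ B <;> by_cases h4 : G.snd e ∈ B <;> simp [h1, h2, h3, h4]
  omega

/-- First ends after splitting. -/
def spF (G : Multigraph V E) (v : V) (a b c d : E) (e : E) : V :=
  if e = a then oth G v a else if e = b then oth G v a else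
  if e = c then oth G v c else if e = d then oth G v c else G.fst e

/-- Second ends after splitting. -/
def spS (G : Multigraph V E) (v : V) (a b c d : E) (e : E) : V :=
  if e = a then oth G v b else if e = b then oth G v a else
  if e = c then oth G v d else if e = d then oth G v c else G.snd e

/-- Sign of `e` as an edge from `oth e` to `v`. -/
def ep (G : Multigraph V E) (v : V) (e : E) : ZMod 3 := if G.fst e = v then -1 else 1

theorem ep_ne (G : Multigraph V E) (v : V) (e : E) : ep G v e ≠ 0 := by
  unfold ep; split_ifs <;> decide

theorem ep_mul (G : Multigraph V E) (v : V) (e : E) (he : G.Incident v e) (u : V) (x : ZMod 3) :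
    (ep G v e * x) * ((if G.fst e = u then 1 else 0) - (if G.snd e = u then 1 else 0)) =
     x * ((if oth G v e = u then 1 else 0) - (if v = u then 1 else 0)) := by
  unfold ep oth
  by_cases h : G.fst e = v
  · simp only [h, if_true]; ring
  · have h2 : G.snd e = v := he.resolve_left h
    simp only [h, h2, if_false]; ring

theorem split (G : Multigraph V E) {v : V} {a b c d : E}
    (hab : a ≠ b) (hac : a ≠ c) (had : a ≠ d)
    (hbc : b ≠ c) (hbd : b ≠ d) (hcd : c ≠ d) (hT : ∀ e, G.Incident v e ↔ e ∈ ({a, b, c, d} : Finset E))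
    (hg : Good G v a b c d)
    (H : ∀ f s : E → {u : V // u ≠ v}, (∀ A : Finset {u : V // u ≠ v}, A.Nonempty → A ≠ univ →
      4 ≤ cr f s A) → NZ f s) : NZ G.fst G.snd := by
  have hout : ∀ e ∈ univ \ ({a, b, c, d} : Finset E), (G.fst e ≠ v ∧ G.snd e ≠ v) ∧
      e ≠ a ∧ e ≠ b ∧ e ≠ c ∧ e ≠ d := by
    intro e he
    have he := (Finset.mem_sdiff.1 he).2
    have : ¬ G.Incident v e := by
      rw [hT]; exact he
    unfold Incident at this
    push Not at this
    exact ⟨this, by simpa using he⟩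
  have hF : ∀ e, spF G v a b c d e ≠ v := by
    intro e
    unfold spF
    split_ifs with h1 h2 h3 h4
    iterate 4 exact oth_ne _ _ _
    exact (hout e (by simp [*])).1.1
  have hS : ∀ e, spS G v a b c d e ≠ v := by
    intro e
    unfold spS
    split_ifs with h1 h2 h3 h4
    iterate 4 exact oth_ne _ _ _
    exact (hout e (by simp [*])).1.2
  obtain ⟨φ, h0, hb⟩ := H (fun e => ⟨_, hF e⟩) (fun e => ⟨_, hS e⟩) (by
    intro A h1 h2
    have k := hg (A.map (Function.Embedding.subtype _)) (by simp) (by simpa using h1) (by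
      by_contra hcon
      push Not at hcon
      apply h2
      ext u
      have := hcon u.1 u.2
      simpa [u.2] using this)
    have hm : ∀ (u : V) (hu : u ≠ v), (⟨u, hu⟩ : {u : V // u ≠ v}) ∈ A ↔
        u ∈ A.map (Function.Embedding.subtype _) := by
      intro u hu
      simp [hu]
    unfold cr
    simp only [hm]
    generalize A.map (Function.Embedding.subtype _) = B at *
    rw [sum_T hab hac had hbc hbd hcd]
    unfold d0 at k
    have : ∑ e ∈ univ \ ({a, b, c, d} : Finset E),
        (if (spF G v a b c d e ∈ B ↔ spS G v a b c d e ∈ B) then 0 else 1) =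
        ∑ e ∈ univ \ ({a, b, c, d} : Finset E), (if (G.fst e ∈ B ↔ G.snd e ∈ B) then 0 else 1) := by
      refine Finset.sum_congr rfl fun e he => ?_
      simp [spF, spS, hout e he]
    rw [this]
    simp only [spF, spS, hab.symm, hac.symm, had.symm, hbc.symm, hbd.symm, hcd.symm, if_true, if_false]
    omega)
  refine ⟨fun e => if e = a then ep G v a * φ a else if e = b then ep G v b * (- φ a) else
    if e = c then ep G v c * φ c else if e = d then ep G v d * (- φ c) else φ e, fun e => ?_,
    fun u => ?_⟩
  · dsimp only
    split_ifs <;> simp [ep_ne, h0]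
  · have key : bd G.fst G.snd (fun e => if e = a then ep G v a * φ a else if e = b then ep G v b * (- φ a) else
    if e = c then ep G v c * φ c else if e = d then ep G v d * (- φ c) else φ e) u =
      bd (spF G v a b c d) (spS G v a b c d) φ u := by
      unfold bd
      rw [sum_T hab hac had hbc hbd hcd, sum_T hab hac had hbc hbd hcd]
      congr 1
      · refine Finset.sum_congr rfl fun e he => ?_
        simp [spF, spS, hout e he]
      · simp only [spF, spS, hab.symm, hac.symm, had.symm, hbc.symm, hbd.symm, hcd.symm, if_true, if_false]
        rw [ep_mul G v a ((hT a).2 (by simp)), ep_mul G v b ((hT b).2 (by simp)),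
          ep_mul G v c ((hT c).2 (by simp)), ep_mul G v d ((hT d).2 (by simp))]
        ring
    rw [key]
    by_cases hu : u = v
    · subst hu
      unfold bd
      simp [hF, hS]
    · rw [← hb ⟨u, hu⟩]
      unfold bd
      simp only [Subtype.mk.injEq]

theorem main_ind
    (hyp : ∀ (V E : Type) [Fintype V] [DecidableEq V] [Fintype E] [DecidableEq E] (G : Multigraph V E),
      Nonempty V → G.Z3Reduced → ∃ v : V, G.degree v ≤ 4) (n : ℕ) :
    ∀ (V E : Type) [Fintype V] [DecidableEq V] [Fintype E] [DecidableEq E] (G : Multigraph V E),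
      Fintype.card V = n → G.EdgeConnected 4 → NZ G.fst G.snd := by
  induction n using Nat.strong_induction_on with
  | _ n ih =>
  intro V E _ _ _ _ G hn h4
  by_cases hsmall : Fintype.card V ≤ 1
  · refine ⟨fun _ => 1, fun _ => (by decide : (1 : ZMod 3) ≠ 0), fun v => ?_⟩
    unfold bd
    refine Finset.sum_eq_zero fun e _ => ?_
    exact absurd (Fintype.card_le_one_iff.1 hsmall _ _) (G.no_loop e)
  by_cases hred : G.Z3Reduced
  · obtain ⟨v, hv⟩ := hyp V E G (Fintype.card_pos_iff.1 (by omega)) hred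
    have hinc : G.cut {v} = univ.filter fun e => G.Incident v e := by
      ext e
      have := G.no_loop e
      simp only [cut, Finset.mem_filter, Finset.mem_univ, true_and, Finset.mem_singleton]
      unfold Incident
      by_cases h : G.fst e = v
      · have : G.snd e ≠ v := fun h' => this (h.trans h'.symm)
        simp [h, this]
      · simp [h]
    have hge := h4 {v} (by simp) (by
      intro h
      have := congrArg Finset.card h
      simp at this
      omega)
    have hcard : (univ.filter fun e => G.Incident v e).card = 4 := by
      unfold degree at hv
      rw [hinc] at hge
      omega
    obtain ⟨a, t, hat, hins, ht⟩ := Finset.card_eq_succ.1 hcard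
    obtain ⟨b, c, d, hbc, hbd, hcd, rfl⟩ := Finset.card_eq_three.1 ht
    have hT : ∀ e, G.Incident v e ↔ e ∈ ({a, b, c, d} : Finset E) := by
      intro e
      rw [hins]; simp
    simp only [Finset.mem_insert, Finset.mem_singleton, not_or] at hat
    obtain ⟨hab, hac, had⟩ := hat
    have hlt : Fintype.card {u : V // u ≠ v} < n := by
      rw [← hn]
      exact Fintype.card_subtype_lt (x := v) (by simp)
    have H : ∀ f s : E → {u : V // u ≠ v}, (∀ A : Finset {u : V // u ≠ v}, A.Nonempty → A ≠ univ →
      4 ≤ cr f s A) → NZ f s := fun f s =>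
        loopy (fun E' _ _ G' h' => ih _ hlt _ E' G' rfl h') f s
    rcases good_or G h4 hab hac had hbc hbd hcd hT with hg | hg
    · exact split G hab hac had hbc hbd hcd hT hg H
    · refine split G hac hab had hbc.symm hcd hbd (fun e => ?_) hg H
      rw [hT]; simp; tauto
  · unfold Z3Reduced at hred
    push Not at hred
    obtain ⟨S, F, hF, hS, hZ⟩ := hred
    have hlt : Fintype.card (Option {v : V // v ∉ S}) < n := by
      rw [Fintype.card_option, Fintype.card_subtype_compl, Fintype.card_coe, hn]
      have := Finset.card_le_univ S
      omega
    refine contract G S F hF hZ (loopy (fun E' _ _ G' h' => ih _ hlt _ E' G' rfl h') _ _ ?_)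
    exact contract_cut G S (Finset.card_pos.1 (by omega)) h4

/-- If every (nonempty) `ℤ₃`-reduced graph has a vertex of degree at most 4,
then every 4-edge-connected graph admits a mod 3-orientation. -/
theorem stmt_15
    (hyp : ∀ (V E : Type) [Fintype V] [DecidableEq V] [Fintype E] [DecidableEq E] (G : Multigraph V E),
      Nonempty V → G.Z3Reduced → ∃ v : V, G.degree v ≤ 4)
    {V E : Type} [Fintype V] [DecidableEq V] [Fintype E] [DecidableEq E] (G : Multigraph V E) (h4 : G.EdgeConnected 4) :
    G.Mod3Orientable := by
  exact orientable_of_NZ G (main_ind hyp _ V E G rfl h4)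

end Multigraph
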